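/- arXiv:2407.10478 — 2 statements merged into one kernel-verified Lean document; each statement's English description precedes it below -/
import Mathlib

section
/- Let H₀ be a real diagonal matrix in Σ_k (2 ≤ k < n) and let H ∈ V₀ have the unique exact Schrieffer–Wolff decomposition H = exp(iS)·B̃·exp(−iS) (S Hermitian block off-diagonal, B̃ Hermitian block diagonal, the first k columns of exp(iS) spanning the sum of the eigenspaces of H for its lowest k eigenvalues), and assume λ_k(H) < λ_{k+1}(H). Let B̃' be obtained from B̃ by replacing its upper-left k×k block by (τ/k)·I_k, where τ is the trace of that block. Then exp(iS)·B̃'·exp(−iS) = H_Σ, i.e., the projection obtained by omitting the effective Hamiltonian from the Schrieffer–Wolff decomposition coincides with the matrix obtained from H by collapsing its lowest k eigenvalues to their mean. -/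
open Matrix

noncomputable section

/-- Sorted eigenvalues (increasing, counted with multiplicity) of a Hermitian matrix
(junk value for non-Hermitian matrices). -/
def eigs {n : ℕ} (H : Matrix (Fin n) (Fin n) ℂ) : Fin n → ℝ :=
  if hH : H.IsHermitian then hH.eigenvalues ∘ Tuple.sort hH.eigenvalues else fun _ => 0

/-- Mean of the lowest k eigenvalues. -/
def lamBar {n : ℕ} (k : ℕ) (H : Matrix (Fin n) (Fin n) ℂ) : ℝ :=
  (∑ j : Fin n, if (j : ℕ) < k then eigs H j else 0) / k

/-- `Λ_Σ`: the diagonal of sorted eigenvalues, with the lowest k entries replaced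
by their mean. -/
def LambdaSigma {n : ℕ} (k : ℕ) (H : Matrix (Fin n) (Fin n) ℂ) : Matrix (Fin n) (Fin n) ℂ :=
  Matrix.diagonal fun i => if (i : ℕ) < k then (lamBar k H : ℂ) else (eigs H i : ℂ)

/-- Block diagonal w.r.t. the k-split. -/
def BlockDiag {n : ℕ} (k : ℕ) (M : Matrix (Fin n) (Fin n) ℂ) : Prop :=
  ∀ a b : Fin n, ¬(((a : ℕ) < k) ↔ ((b : ℕ) < k)) → M a b = 0

/-- Block off-diagonal w.r.t. the k-split. -/
def BlockOffDiag {n : ℕ} (k : ℕ) (M : Matrix (Fin n) (Fin n) ℂ) : Prop :=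
  ∀ a b : Fin n, (((a : ℕ) < k) ↔ ((b : ℕ) < k)) → M a b = 0

/-- Span of the first k columns of a matrix U. -/
def colSpanFirst {n : ℕ} (k : ℕ) (U : Matrix (Fin n) (Fin n) ℂ) : Submodule ℂ (Fin n → ℂ) :=
  Submodule.span ℂ {v | ∃ b : Fin n, (b : ℕ) < k ∧ v = fun a => U a b}

/-- Sum of the eigenspaces of H corresponding to its lowest k eigenvalues. -/
def lowSpace {n : ℕ} (k : ℕ) (H : Matrix (Fin n) (Fin n) ℂ) : Submodule ℂ (Fin n → ℂ) :=
  ⨆ (i : Fin n) (_ : (i : ℕ) < k), Module.End.eigenspace H.mulVecLin ((eigs H i : ℝ) : ℂ)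

/- Let `P` be the projection onto the first `k` coordinates. Both sides of the claim have the form
`t • E + (1 - E) * H` with `t = trace (E * H) / trace E`: the left one for `E = W * P * W⁻¹`, where
`W = exp (iS)`, and the right one for `E = U * P * U⁻¹`. These two projections have the same range,
the low-energy space, and they commute: the first commutes with `H` since `B` is block diagonal, and
the second is a polynomial in `H` by the spectral gap. Commuting idempotents with the same range are
equal. -/

section Conjugation

theorem isIdempotentElem_units_conj {M : Type*} [Monoid M] {e : M} (he : IsIdempotentElem e)
    (u : Mˣ) : IsIdempotentElem (u * e * ↑u⁻¹) :=
  calc u * e * ↑u⁻¹ * (u * e * ↑u⁻¹) = u * (e * e) * ↑u⁻¹ := by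
        simp only [mul_assoc, Units.inv_mul_cancel_left]
    _ = u * e * ↑u⁻¹ := by rw [he.eq]

theorem commute_units_conj_right_iff {M : Type*} [Monoid M] {a b : M} {u : Mˣ} :
    Commute a (u * b * ↑u⁻¹) ↔ Commute (↑u⁻¹ * a * u) b := by
  rw [commute_iff_eq, commute_iff_eq, ← u⁻¹.mul_right_inj, ← u.mul_left_inj]
  simp only [mul_assoc, Units.inv_mul_cancel_left, Units.inv_mul, mul_one]

end Conjugation

theorem linearMap_idempotent_eq_of_commute_of_range_eq {R M : Type*} [Semiring R] [AddCommMonoid M]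
    [Module R M] {f g : M →ₗ[R] M} (hf : IsIdempotentElem f) (hg : IsIdempotentElem g)
    (hcomm : Commute f g) (hrange : f.range = g.range) : f = g :=
  calc f = g * f := ((LinearMap.IsIdempotentElem.comp_eq_right_iff hg f).mpr hrange.le).symm
    _ = f * g := hcomm.eq.symm
    _ = g := (LinearMap.IsIdempotentElem.comp_eq_right_iff hf g).mpr hrange.ge

theorem matrix_idempotent_eq_of_commute_of_range_eq {ι R : Type*} [Fintype ι] [CommSemiring R]
    {E F : Matrix ι ι R} (hE : IsIdempotentElem E) (hF : IsIdempotentElem F)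
    (hcomm : Commute E F) (hrange : E.mulVecLin.range = F.mulVecLin.range) : E = F := by
  classical
  exact toLinAlgEquiv'.injective <| linearMap_idempotent_eq_of_commute_of_range_eq
    (hE.map toLinAlgEquiv') (hF.map toLinAlgEquiv') (hcomm.map toLinAlgEquiv') hrange

section CoordProj

variable {ι : Type*} [DecidableEq ι]

/-- The projection of `ι → R` onto the coordinates satisfying `p`, along the remaining ones,
as a matrix. -/
def coordProj (R : Type*) [Zero R] [One R] (p : ι → Prop) [DecidablePred p] : Matrix ι ι R :=
  diagonal fun i => if p i then 1 else 0

variable {R : Type*} [Fintype ι] {p : ι → Prop} [DecidablePred p]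

theorem isIdempotentElem_coordProj [Semiring R] : IsIdempotentElem (coordProj R p) := by
  simp only [IsIdempotentElem, coordProj, diagonal_mul_diagonal, ite_mul, one_mul, zero_mul,
    ← ite_and, and_self]

theorem trace_coordProj [Semiring R] : trace (coordProj R p) = Fintype.card {i // p i} := by
  simp only [trace, coordProj, diag_diagonal, Finset.sum_boole, Fintype.card_subtype]

theorem trace_coordProj_mul [Semiring R] (M : Matrix ι ι R) :
    trace (coordProj R p * M) = ∑ i, if p i then M i i else 0 := by
  simp [trace, coordProj]

theorem commute_coordProj_iff [Semiring R] {M : Matrix ι ι R} :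
    Commute M (coordProj R p) ↔ ∀ a b, ¬(p a ↔ p b) → M a b = 0 := by
  simp only [commute_iff_eq, ← Matrix.ext_iff, coordProj, mul_diagonal, diagonal_mul]
  refine forall₂_congr fun a b => ?_
  by_cases ha : p a <;> by_cases hb : p b <;> simp [ha, hb, eq_comm]

theorem commute_coordProj_of_commute_diagonal [CommRing R] [NoZeroDivisors R]
    {M : Matrix ι ι R} {d : ι → R} (hd : ∀ a b, p a → ¬p b → d a ≠ d b)
    (h : Commute M (diagonal d)) : Commute M (coordProj R p) := by
  rw [commute_coordProj_iff]
  intro a b hab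
  have hne : d b - d a ≠ 0 := by
    rw [sub_ne_zero]
    by_cases ha : p a
    · exact (hd a b ha fun hb => hab (iff_of_true ha hb)).symm
    · exact hd b a (by_contra fun hb => hab (iff_of_false ha hb)) ha
  have hentry : M a b * d b = d a * M a b := by
    simpa only [mul_diagonal, diagonal_mul] using congrFun₂ h.eq a b
  exact (mul_eq_zero.mp (by linear_combination hentry)).resolve_left hne

theorem mem_range_units_conj_coordProj_iff [CommRing R] {U : (Matrix ι ι R)ˣ} {v : ι → R} :
    v ∈ (U.val * coordProj R p * U⁻¹.val).mulVecLin.range ↔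
      ∀ a, ¬p a → (U⁻¹.val *ᵥ v) a = 0 := by
  constructor
  · rintro ⟨w, rfl⟩ a ha
    rw [mulVecLin_apply, mul_assoc, mulVec_mulVec, Units.inv_mul_cancel_left, ← mulVec_mulVec,
      coordProj, mulVec_diagonal, if_neg ha, zero_mul]
  · intro hv
    have hproj : coordProj R p *ᵥ (U⁻¹.val *ᵥ v) = U⁻¹.val *ᵥ v := by
      ext a
      rw [coordProj, mulVec_diagonal]
      split_ifs with ha
      · rw [one_mul]
      · rw [zero_mul, hv a ha]
    refine ⟨v, ?_⟩
    rw [mulVecLin_apply, ← mulVec_mulVec, ← mulVec_mulVec, hproj, mulVec_mulVec, Units.mul_inv,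
      one_mulVec]

end CoordProj

section Eigenspace

variable {ι R : Type*} [Fintype ι] [DecidableEq ι] [CommRing R]

theorem units_inv_mulVec_col (U : (Matrix ι ι R)ˣ) (i : ι) :
    U⁻¹.val *ᵥ U.val.col i = Pi.single i 1 := by
  rw [← mulVec_single_one, mulVec_mulVec, Units.inv_mul, one_mulVec]

theorem span_col_eq_range_units_conj_coordProj (U : (Matrix ι ι R)ˣ) (p : ι → Prop)
    [DecidablePred p] :
    Submodule.span R (U.val.col '' {i | p i}) =
      (U.val * coordProj R p * U⁻¹.val).mulVecLin.range := by
  apply le_antisymm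
  · rw [Submodule.span_le]
    rintro _ ⟨i, hi, rfl⟩
    refine mem_range_units_conj_coordProj_iff.mpr fun a ha => ?_
    rw [units_inv_mulVec_col, Pi.single_eq_of_ne]
    rintro rfl
    exact ha hi
  · intro v hv
    rw [mem_range_units_conj_coordProj_iff] at hv
    have hsum : v = ∑ i, (U⁻¹.val *ᵥ v) i • U.val.col i :=
      calc v = U.val *ᵥ (U⁻¹.val *ᵥ v) := by rw [mulVec_mulVec, Units.mul_inv, one_mulVec]
        _ = ∑ i, (U⁻¹.val *ᵥ v) i • U.val.col i := by
          rw [mulVec_eq_sum (U⁻¹.val *ᵥ v)]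
          simp only [op_smul_eq_smul]
          rfl
    rw [hsum]
    refine Submodule.sum_mem _ fun i _ => ?_
    by_cases hi : p i
    · exact Submodule.smul_mem _ _ (Submodule.subset_span ⟨i, hi, rfl⟩)
    · rw [hv i hi, zero_smul]
      exact Submodule.zero_mem _

theorem mem_eigenspace_units_conj_diagonal_iff [NoZeroDivisors R] {U : (Matrix ι ι R)ˣ}
    {d : ι → R} {μ : R} {v : ι → R} :
    v ∈ Module.End.eigenspace (U.val * diagonal d * U⁻¹.val).mulVecLin μ ↔
      ∀ a, d a ≠ μ → (U⁻¹.val *ᵥ v) a = 0 := by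
  have hcoord : (U.val * diagonal d * U⁻¹.val) *ᵥ v = μ • v ↔
      diagonal d *ᵥ (U⁻¹.val *ᵥ v) = μ • (U⁻¹.val *ᵥ v) := by
    rw [← (mulVec_injective_of_isUnit U⁻¹.isUnit).eq_iff, mulVec_smul]
    simp only [mulVec_mulVec, mul_assoc, Units.inv_mul_cancel_left]
  rw [Module.End.mem_eigenspace_iff, mulVecLin_apply, hcoord, funext_iff]
  refine forall_congr' fun a => ?_
  rw [mulVec_diagonal, Pi.smul_apply, smul_eq_mul, mul_eq_mul_right_iff, or_iff_not_imp_left]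

theorem iSup_eigenspace_units_conj_diagonal [NoZeroDivisors R] (U : (Matrix ι ι R)ˣ)
    {d : ι → R} {p : ι → Prop} (hd : ∀ a b, p a → ¬p b → d a ≠ d b) :
    ⨆ (i) (_ : p i), Module.End.eigenspace (U.val * diagonal d * U⁻¹.val).mulVecLin (d i) =
      Submodule.span R (U.val.col '' {i | p i}) := by
  classical
  apply le_antisymm
  · rw [span_col_eq_range_units_conj_coordProj]
    refine iSup₂_le fun i hi v hv => mem_range_units_conj_coordProj_iff.mpr fun a ha => ?_
    exact mem_eigenspace_units_conj_diagonal_iff.mp hv a (hd i a hi ha).symm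
  · rw [Submodule.span_le]
    rintro _ ⟨i, hi, rfl⟩
    refine Submodule.mem_iSup_of_mem i (Submodule.mem_iSup_of_mem hi ?_)
    refine mem_eigenspace_units_conj_diagonal_iff.mpr fun a ha => ?_
    rw [units_inv_mulVec_col, Pi.single_eq_of_ne]
    rintro rfl
    exact ha rfl

theorem units_conj_coordProj_eq_of_span_col_eq [NoZeroDivisors R] {W U : (Matrix ι ι R)ˣ}
    {B : Matrix ι ι R} {d : ι → R} {p : ι → Prop} [DecidablePred p]
    (hd : ∀ a b, p a → ¬p b → d a ≠ d b) (hB : Commute B (coordProj R p))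
    (h : W.val * B * W⁻¹.val = U.val * diagonal d * U⁻¹.val)
    (hspan : Submodule.span R (W.val.col '' {i | p i}) =
      Submodule.span R (U.val.col '' {i | p i})) :
    W.val * coordProj R p * W⁻¹.val = U.val * coordProj R p * U⁻¹.val := by
  have hcomm : Commute (W.val * coordProj R p * W⁻¹.val) (U.val * diagonal d * U⁻¹.val) := by
    rw [← h, commute_units_conj_right_iff]
    simpa only [mul_assoc, Units.inv_mul_cancel_left, Units.inv_mul, mul_one] using hB.symm
  rw [commute_units_conj_right_iff] at hcomm
  refine matrix_idempotent_eq_of_commute_of_range_eq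
    (isIdempotentElem_units_conj isIdempotentElem_coordProj W)
    (isIdempotentElem_units_conj isIdempotentElem_coordProj U)
    (commute_units_conj_right_iff.mpr (commute_coordProj_of_commute_diagonal hd hcomm)) ?_
  rw [← span_col_eq_range_units_conj_coordProj, hspan, span_col_eq_range_units_conj_coordProj]

end Eigenspace

section MeanCollapse

variable {ι K : Type*} [Fintype ι] [DecidableEq ι] [Field K]

/-- For a projection `E` commuting with `M`, the matrix acting on the range of `E` as the scalar
`trace (E * M) / trace E`, the mean eigenvalue of `M` there, and on the kernel of `E` as `M`. -/
def meanCollapse (E M : Matrix ι ι K) : Matrix ι ι K :=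
  (trace (E * M) / trace E) • E + (1 - E) * M

theorem meanCollapse_units_conj (U : (Matrix ι ι K)ˣ) (E M : Matrix ι ι K) :
    meanCollapse (U.val * E * U⁻¹.val) (U.val * M * U⁻¹.val) =
      U.val * meanCollapse E M * U⁻¹.val := by
  have hmul : U.val * E * U⁻¹.val * (U.val * M * U⁻¹.val) = U.val * (E * M) * U⁻¹.val := by
    simp only [mul_assoc, Units.inv_mul_cancel_left]
  simp only [meanCollapse, sub_mul, one_mul, hmul, trace_units_conj, mul_add, mul_sub, add_mul,
    mul_smul_comm, smul_mul_assoc]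

theorem meanCollapse_coordProj_apply (p : ι → Prop) [DecidablePred p] (M : Matrix ι ι K)
    (a b : ι) :
    meanCollapse (coordProj K p) M a b =
      if p a then
        if a = b then (∑ i, if p i then M i i else 0) / Fintype.card {i // p i} else 0
      else M a b := by
  rw [meanCollapse, trace_coordProj_mul, trace_coordProj]
  by_cases ha : p a <;> simp [coordProj, sub_mul, diagonal_apply, ha]

end MeanCollapse

section SchriefferWolff

variable {n k : ℕ}

theorem blockDiag_iff_commute_coordProj {M : Matrix (Fin n) (Fin n) ℂ} :
    BlockDiag k M ↔ Commute M (coordProj ℂ fun i : Fin n => (i : ℕ) < k) :=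
  commute_coordProj_iff.symm

theorem colSpanFirst_eq_span_col (U : Matrix (Fin n) (Fin n) ℂ) :
    colSpanFirst k U = Submodule.span ℂ (U.col '' {i | (i : ℕ) < k}) := by
  simp only [colSpanFirst, Set.image, Set.mem_ofPred_eq, eq_comm, col_apply']

theorem monotone_eigs (H : Matrix (Fin n) (Fin n) ℂ) : Monotone (eigs H) := by
  unfold eigs
  split_ifs with hH
  · exact Tuple.monotone_sort hH.eigenvalues
  · exact monotone_const

theorem eigs_ne_of_gap {H : Matrix (Fin n) (Fin n) ℂ} (hkn : k < n)
    (hgap : eigs H ⟨k - 1, by omega⟩ < eigs H ⟨k, hkn⟩) (a b : Fin n) (ha : (a : ℕ) < k)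
    (hb : ¬(b : ℕ) < k) : (eigs H a : ℂ) ≠ eigs H b := by
  have hab : eigs H a < eigs H b :=
    calc eigs H a ≤ eigs H ⟨k - 1, by omega⟩ := monotone_eigs H (Fin.mk_le_mk.mpr (by omega))
      _ < eigs H ⟨k, hkn⟩ := hgap
      _ ≤ eigs H b := monotone_eigs H (Fin.mk_le_mk.mpr (by omega))
  exact_mod_cast hab.ne

theorem of_blockMean_eq_meanCollapse (hkn : k ≤ n) {B : Matrix (Fin n) (Fin n) ℂ}
    (hB : BlockDiag k B) :
    (Matrix.of fun a b : Fin n =>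
      if (a : ℕ) < k ∧ (b : ℕ) < k then
        (if a = b then (∑ c : Fin n, if (c : ℕ) < k then B c c else 0) / (k : ℂ) else 0)
      else B a b) = meanCollapse (coordProj ℂ fun i : Fin n => (i : ℕ) < k) B := by
  ext a b
  rw [meanCollapse_coordProj_apply, Fintype.card_fin_lt_of_le hkn, of_apply]
  by_cases ha : (a : ℕ) < k <;> by_cases hb : (b : ℕ) < k
  · simp [ha, hb]
  · have hne : a ≠ b := fun h => hb (h ▸ ha)
    simp [ha, hb, hne, hB a b (by simp [ha, hb])]
  · simp [ha]
  · simp [ha]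

theorem lambdaSigma_eq_meanCollapse (hkn : k ≤ n) (H : Matrix (Fin n) (Fin n) ℂ) :
    LambdaSigma k H = meanCollapse (coordProj ℂ fun i : Fin n => (i : ℕ) < k)
      (diagonal fun i => (eigs H i : ℂ)) := by
  ext a b
  have hmean : (lamBar k H : ℂ) = (∑ i : Fin n, if (i : ℕ) < k then (eigs H i : ℂ) else 0) / k := by
    rw [lamBar]
    push_cast
    simp only [apply_ite Complex.ofReal, Complex.ofReal_zero]
  simp only [meanCollapse_coordProj_apply, Fintype.card_fin_lt_of_le hkn, LambdaSigma,
    diagonal_apply_eq, hmean, diagonal_apply]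
  split_ifs <;> rfl

theorem sw_projection_eq_collapse_general (hkn : k < n) {H W B U B' : Matrix (Fin n) (Fin n) ℂ}
    (hW : IsUnit W) (hU : IsUnit U) (hBd : BlockDiag k B) (hdec : H = W * B * W⁻¹)
    (hspan : colSpanFirst k W = lowSpace k H)
    (hgap : eigs H ⟨k - 1, by omega⟩ < eigs H ⟨k, hkn⟩)
    (hB' : B' = Matrix.of fun a b : Fin n =>
      if (a : ℕ) < k ∧ (b : ℕ) < k then
        (if a = b then (∑ c : Fin n, if (c : ℕ) < k then B c c else 0) / (k : ℂ) else 0)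
      else B a b)
    (hdiag : U⁻¹ * H * U = diagonal fun i => (eigs H i : ℂ)) :
    W * B' * W⁻¹ = U * LambdaSigma k H * U⁻¹ := by
  lift W to (Matrix (Fin n) (Fin n) ℂ)ˣ using hW
  lift U to (Matrix (Fin n) (Fin n) ℂ)ˣ using hU
  simp only [← coe_units_inv] at hdec hdiag ⊢
  set P : Matrix (Fin n) (Fin n) ℂ := coordProj ℂ fun i : Fin n => (i : ℕ) < k
  have hne := eigs_ne_of_gap hkn hgap
  have hHU : H = U.val * (diagonal fun i => (eigs H i : ℂ)) * U⁻¹.val := by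
    simp only [← hdiag, mul_assoc, Units.mul_inv_cancel_left, Units.mul_inv, mul_one]
  have hlow : lowSpace k H = Submodule.span ℂ (U.val.col '' {i | (i : ℕ) < k}) := by
    rw [← iSup_eigenspace_units_conj_diagonal U hne, ← hHU, lowSpace]
  have hproj : W.val * P * W⁻¹.val = U.val * P * U⁻¹.val :=
    units_conj_coordProj_eq_of_span_col_eq hne (blockDiag_iff_commute_coordProj.mp hBd)
      (hdec.symm.trans hHU) (by rw [← colSpanFirst_eq_span_col, hspan, hlow])
  calc W.val * B' * W⁻¹.val = meanCollapse (W.val * P * W⁻¹.val) (W.val * B * W⁻¹.val) := by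
        rw [hB', of_blockMean_eq_meanCollapse hkn.le hBd, meanCollapse_units_conj]
    _ = meanCollapse (U.val * P * U⁻¹.val)
          (U.val * (diagonal fun i => (eigs H i : ℂ)) * U⁻¹.val) := by
        rw [hproj, ← hdec, ← hHU]
    _ = U.val * LambdaSigma k H * U⁻¹.val := by
        rw [meanCollapse_units_conj, lambdaSigma_eq_meanCollapse hkn.le]

end SchriefferWolff

/-- **Projection to Σ_k:** omitting the effective Hamiltonian from the Schrieffer–Wolff
decomposition (i.e. replacing the upper-left `k × k` block of `B̃` by `(τ/k)·I_k` where `τ` is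
its trace) yields exactly `H_Σ`, the matrix obtained from `H` by collapsing its lowest `k`
eigenvalues to their mean. -/
theorem sw_projection_eq_collapse {n k : ℕ} (hk2 : 2 ≤ k) (hkn : k < n)
    (l : Fin n → ℝ) (hmono : Monotone l)
    (hdeg : ∀ i j : Fin n, (i : ℕ) < k → (j : ℕ) < k → l i = l j)
    (hgapl : ∀ i j : Fin n, (i : ℕ) < k → (j : ℕ) = k → l i < l j)
    (V₀ : Set (Matrix (Fin n) (Fin n) ℂ))
    (hV₀ : V₀ ∈ nhds (Matrix.diagonal fun i => (l i : ℂ)))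
    (H S B : Matrix (Fin n) (Fin n) ℂ) (hHV : H ∈ V₀)
    (hSh : S.IsHermitian) (hSoff : BlockOffDiag k S)
    (hBh : B.IsHermitian) (hBd : BlockDiag k B)
    (hdec : H = NormedSpace.exp (Complex.I • S) * B * NormedSpace.exp (-(Complex.I • S)))
    (hspan : colSpanFirst k (NormedSpace.exp (Complex.I • S)) = lowSpace k H)
    (hgap : eigs H ⟨k - 1, by omega⟩ < eigs H ⟨k, hkn⟩)
    (B' : Matrix (Fin n) (Fin n) ℂ)
    (hB' : B' = Matrix.of fun a b : Fin n =>
      if (a : ℕ) < k ∧ (b : ℕ) < k then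
        (if a = b then (∑ c : Fin n, if (c : ℕ) < k then B c c else 0) / (k : ℂ) else 0)
      else B a b) :
    ∀ U ∈ Matrix.unitaryGroup (Fin n) ℂ,
      U⁻¹ * H * U = Matrix.diagonal (fun i => (eigs H i : ℂ)) →
      NormedSpace.exp (Complex.I • S) * B' * NormedSpace.exp (-(Complex.I • S))
        = U * LambdaSigma k H * U⁻¹ := by
  intro U hU hdiag
  rw [Matrix.exp_neg] at hdec ⊢
  exact sw_projection_eq_collapse_general hkn (isUnit_exp _) (Unitary.toUnits ⟨U, hU⟩).isUnit
    hBd hdec hspan hgap hB' hdiag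

end
end

section
/- Let f_1,…,f_l be real-analytic functions defined in a neighborhood of 0 ∈ ℝ, not all vanishing identically near 0, and let r = min_{1≤i≤l} ord₀(f_i), a finite natural number. Then the function F(t) = (sgn t)^r · √(f_1(t)² + … + f_l(t)²) is real-analytic in a neighborhood of 0, and ord₀(F) = r. -/
/-!
A family of analytic functions is one analytic function `F` with values in the `L²` product of the
targets, whose order `r` at `x` is the least order of the components. Write
`F t = (t - x) ^ r • G t` with `G` analytic and `G x ≠ 0`. The signs cancel the absolute value in
`‖F t‖ = |t - x| ^ r * ‖G t‖`, leaving `(t - x) ^ r * ‖G t‖`, and the norm of an inner product space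
is analytic away from `0`.
-/

noncomputable section

/-- Order of vanishing of a function at `0 ∈ ℝ`: the smallest `j` such that the `j`-th
iterated derivative at `0` is nonzero (for an analytic function this is the smallest index
of a nonzero Taylor coefficient at `0`), and `⊤` if no such `j` exists. -/
def ord0 (f : ℝ → ℝ) : ℕ∞ :=
  sInf {m : ℕ∞ | ∃ j : ℕ, m = (j : ℕ∞) ∧ iteratedDeriv j f 0 ≠ 0}

open Filter Topology WithLp

theorem natCast_le_ord0 {f : ℝ → ℝ} {n : ℕ} :
    (n : ℕ∞) ≤ ord0 f ↔ ∀ j < n, iteratedDeriv j f 0 = 0 := by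
  rw [ord0, le_sInf_iff]
  constructor
  · intro h j hjn
    by_contra hj
    exact hjn.not_ge (ENat.natCast_le_natCast.mp (h j ⟨j, rfl, hj⟩))
  · rintro h _ ⟨j, rfl, hj⟩
    exact ENat.natCast_le_natCast.mpr (le_of_not_gt fun hjn ↦ hj (h j hjn))

theorem ord0_eq_analyticOrderAt {f : ℝ → ℝ} (hf : AnalyticAt ℝ f 0) :
    ord0 f = analyticOrderAt f 0 :=
  ENat.eq_of_forall_natCast_le_iff fun _ ↦
    natCast_le_ord0.trans (natCast_le_analyticOrderAt_iff_iteratedDeriv_eq_zero hf).symm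

variable {𝕜 : Type*} [NontriviallyNormedField 𝕜]

section ContinuousLinearMap

variable {E : Type*} [NormedAddCommGroup E] [NormedSpace 𝕜 E]
  {F : Type*} [NormedAddCommGroup F] [NormedSpace 𝕜 F]

theorem analyticOrderAt_le_analyticOrderAt_clm_comp (L : E →L[𝕜] F) (f : 𝕜 → E) (x : 𝕜) :
    analyticOrderAt f x ≤ analyticOrderAt (fun z ↦ L (f z)) x := by
  by_cases hf : AnalyticAt 𝕜 f x
  · refine ENat.forall_natCast_le_iff_le.mp fun n hn ↦ ?_
    obtain ⟨g, hg, hfg⟩ := (natCast_le_analyticOrderAt hf).mp hn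
    have hLf : AnalyticAt 𝕜 (fun z ↦ L (f z)) x := (L.analyticAt _).comp hf
    refine (natCast_le_analyticOrderAt hLf).mpr ⟨fun z ↦ L (g z), (L.analyticAt _).comp hg, ?_⟩
    filter_upwards [hfg] with z hz
    rw [hz, map_smul]
  · simp [hf]

theorem analyticOrderAt_clequiv_comp (L : E ≃L[𝕜] F) (f : 𝕜 → E) (x : 𝕜) :
    analyticOrderAt (fun z ↦ L (f z)) x = analyticOrderAt f x := by
  refine le_antisymm ?_ (analyticOrderAt_le_analyticOrderAt_clm_comp (L : E →L[𝕜] F) f x)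
  simpa using analyticOrderAt_le_analyticOrderAt_clm_comp (L.symm : F →L[𝕜] E) (fun z ↦ L (f z)) x

end ContinuousLinearMap

section Pi

variable {ι : Type*} [Fintype ι] {E : ι → Type*} [∀ i, NormedAddCommGroup (E i)]
  [∀ i, NormedSpace 𝕜 (E i)] {f : ∀ i, 𝕜 → E i} {x : 𝕜}

theorem analyticOrderAt_pi (hf : ∀ i, AnalyticAt 𝕜 (f i) x) :
    analyticOrderAt (fun z i ↦ f i z) x = ⨅ i, analyticOrderAt (f i) x := by
  refine le_antisymm (le_iInf fun i ↦ ?_) (ENat.forall_natCast_le_iff_le.mp fun n hn ↦ ?_)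
  · exact analyticOrderAt_le_analyticOrderAt_clm_comp
      (ContinuousLinearMap.proj i : (∀ i, E i) →L[𝕜] E i) (fun z i ↦ f i z) x
  · choose g hg hfg using fun i ↦ (natCast_le_analyticOrderAt (hf i)).mp (le_iInf_iff.mp hn i)
    refine (natCast_le_analyticOrderAt (AnalyticAt.pi hf)).mpr
      ⟨fun z i ↦ g i z, AnalyticAt.pi hg, ?_⟩
    filter_upwards [eventually_all.mpr hfg] with z hz
    exact funext hz

variable (p : ENNReal) [Fact (1 ≤ p)]

theorem analyticAt_toLp (hf : ∀ i, AnalyticAt 𝕜 (f i) x) :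
    AnalyticAt 𝕜 (fun z ↦ toLp p fun i ↦ f i z) x :=
  ((PiLp.continuousLinearEquiv p 𝕜 E).symm.analyticAt _).comp (AnalyticAt.pi hf)

theorem analyticOrderAt_toLp (hf : ∀ i, AnalyticAt 𝕜 (f i) x) :
    analyticOrderAt (fun z ↦ toLp p fun i ↦ f i z) x = ⨅ i, analyticOrderAt (f i) x :=
  (analyticOrderAt_clequiv_comp (PiLp.continuousLinearEquiv p 𝕜 E).symm _ x).trans
    (analyticOrderAt_pi hf)

end Pi

theorem exists_analyticOnNhd_Ioo {E : Type*} [NormedAddCommGroup E] [NormedSpace ℝ E]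
    [CompleteSpace E] {f : ℝ → E} {x : ℝ} (hf : AnalyticAt ℝ f x) :
    ∃ ε > 0, AnalyticOnNhd ℝ f (Set.Ioo (x - ε) (x + ε)) := by
  simpa only [Real.ball_eq_Ioo] using hf.exists_ball_analyticOnNhd

theorem real_sign_mul_abs (t : ℝ) : Real.sign t * |t| = t := by
  obtain ht | rfl | ht := lt_trichotomy t 0
  · rw [Real.sign_of_neg ht, abs_of_neg ht, neg_one_mul, neg_neg]
  · simp
  · rw [Real.sign_of_pos ht, abs_of_pos ht, one_mul]

theorem sign_pow_mul_norm_pow_smul {E : Type*} [SeminormedAddCommGroup E] [NormedSpace ℝ E]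
    (t : ℝ) (r : ℕ) (v : E) : Real.sign t ^ r * ‖t ^ r • v‖ = t ^ r * ‖v‖ := by
  rw [norm_smul, norm_pow, Real.norm_eq_abs, ← mul_assoc, ← mul_pow, real_sign_mul_abs]

section InnerProductSpace

variable {E : Type*} [NormedAddCommGroup E] [InnerProductSpace ℝ E] {f : ℝ → E} {x : ℝ} {r : ℕ}

theorem analyticAt_norm_comp (hf : AnalyticAt ℝ f x) (hfx : f x ≠ 0) :
    AnalyticAt ℝ (fun t ↦ ‖f t‖) x :=
  (contDiffAt_norm ℝ hfx).analyticAt.comp hf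

theorem exists_sign_pow_mul_norm_eventuallyEq (hf : AnalyticAt ℝ f x)
    (hr : analyticOrderAt f x = r) :
    ∃ g : ℝ → ℝ, AnalyticAt ℝ g x ∧ g x ≠ 0 ∧
      (fun t ↦ Real.sign (t - x) ^ r * ‖f t‖) =ᶠ[𝓝 x] fun t ↦ (t - x) ^ r • g t := by
  obtain ⟨g, hg, hgx, hfg⟩ := hf.analyticOrderAt_eq_natCast.mp hr
  refine ⟨fun t ↦ ‖g t‖, analyticAt_norm_comp hg hgx, norm_ne_zero_iff.mpr hgx, ?_⟩
  filter_upwards [hfg] with t ht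
  rw [ht, sign_pow_mul_norm_pow_smul, smul_eq_mul]

theorem analyticAt_sign_pow_mul_norm (hf : AnalyticAt ℝ f x) (hr : analyticOrderAt f x = r) :
    AnalyticAt ℝ (fun t ↦ Real.sign (t - x) ^ r * ‖f t‖) x := by
  obtain ⟨g, hg, -, hfg⟩ := exists_sign_pow_mul_norm_eventuallyEq hf hr
  exact AnalyticAt.congr (by fun_prop) hfg.symm

theorem analyticOrderAt_sign_pow_mul_norm (hf : AnalyticAt ℝ f x)
    (hr : analyticOrderAt f x = r) :
    analyticOrderAt (fun t ↦ Real.sign (t - x) ^ r * ‖f t‖) x = r :=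
  (analyticAt_sign_pow_mul_norm hf hr).analyticOrderAt_eq_natCast.mpr
    (exists_sign_pow_mul_norm_eventuallyEq hf hr)

end InnerProductSpace

theorem order_signed_sqrt_sum_sq_general {ι : Type*} [Fintype ι] {E : ι → Type*}
    [∀ i, NormedAddCommGroup (E i)] [∀ i, InnerProductSpace ℝ (E i)] {f : ∀ i, ℝ → E i} {x : ℝ}
    (hf : ∀ i, AnalyticAt ℝ (f i) x) {r : ℕ} (hr : (r : ℕ∞) = ⨅ i, analyticOrderAt (f i) x) :
    AnalyticAt ℝ (fun t ↦ Real.sign (t - x) ^ r * √(∑ i, ‖f i t‖ ^ 2)) x ∧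
      analyticOrderAt (fun t ↦ Real.sign (t - x) ^ r * √(∑ i, ‖f i t‖ ^ 2)) x = r := by
  have hF := analyticAt_toLp 2 hf
  have hFr := (analyticOrderAt_toLp 2 hf).trans hr.symm
  simpa only [PiLp.norm_eq_of_L2] using
    And.intro (analyticAt_sign_pow_mul_norm hF hFr) (analyticOrderAt_sign_pow_mul_norm hF hFr)

/-- **Lemma (order of a signed square root of a sum of squares):** if `f_1, …, f_l` are
real-analytic near `0`, not all identically zero near `0`, and `r` is the minimum of their
orders at `0`, then `F(t) = (sgn t)^r · √(f_1(t)² + … + f_l(t)²)` is real-analytic near `0`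
and has order `r` at `0`. -/
theorem order_signed_sqrt_sum_sq {l : ℕ} (f : Fin l → ℝ → ℝ)
    (hf : ∀ i, AnalyticAt ℝ (f i) 0)
    (hnz : ∃ i, ¬ ∀ᶠ t in nhds (0 : ℝ), f i t = 0)
    (r : ℕ) (hr : (r : ℕ∞) = ⨅ i, ord0 (f i)) :
    (∃ ε > 0, AnalyticOnNhd ℝ
      (fun t => Real.sign t ^ r * Real.sqrt (∑ i, f i t ^ 2)) (Set.Ioo (-ε) ε)) ∧
    ord0 (fun t => Real.sign t ^ r * Real.sqrt (∑ i, f i t ^ 2)) = (r : ℕ∞) := by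
  simp only [ord0_eq_analyticOrderAt (hf _)] at hr
  have hgeneral := order_signed_sqrt_sum_sq_general hf hr
  simp only [sub_zero, Real.norm_eq_abs, sq_abs] at hgeneral
  obtain ⟨hF, hFr⟩ := hgeneral
  exact ⟨by simpa using exists_analyticOnNhd_Ioo hF, (ord0_eq_analyticOrderAt hF).trans hFr⟩

end
end
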